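/- Let p > 1 be a real number with p ≠ 5, and let f : ℝ → ℝ be a Schwartz function, not identically zero, that satisfies the fourth-order similarity ODE -f''''(y) + (1/4)·y·f'(y) + (1/(p-1))·f(y) + |f(y)|^p = 0 for all y ∈ ℝ. Then the total mass of f satisfies: ∫_ℝ f(y) dy < 0 if 1 < p < 5, and ∫_ℝ f(y) dy > 0 if p > 5. -/

import Mathlib

open MeasureTheory

/-!
Integrate the equation over `ℝ`. The fourth derivative contributes nothing, and integration by
parts turns the drift `(1/4) y f'` into `-(1/4) f`, so that `∫ |f|^p = (1/4 - 1/(p-1)) ∫ f`. The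
left side is positive, hence the mass has the sign of `1/4 - 1/(p-1)`, which changes at `p = 5`.
The order `4` plays no special role: for order `n` with drift `(1/n) y f'` the sign changes at
`p = n + 1`.
-/

section Schwartz

open scoped SchwartzMap

variable {E : Type*} [NormedAddCommGroup E] [NormedSpace ℝ E]

lemma integrable_smul_schwartzMap {D : Type*} [NormedAddCommGroup D] [NormedSpace ℝ D]
    [MeasurableSpace D] [BorelSpace D] [SecondCountableTopology D] {μ : Measure D}
    [μ.HasTemperateGrowth] {w : D → ℝ} (hw : w.HasTemperateGrowth) (f : 𝓢(D, E)) :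
    Integrable (fun x ↦ w x • f x) μ := by
  have h := (SchwartzMap.smulLeftCLM E w f).integrable (μ := μ)
  rwa [SchwartzMap.smulLeftCLM_apply hw] at h

lemma hasTemperateGrowth_deriv {w : ℝ → E} (hw : w.HasTemperateGrowth) :
    (deriv w).HasTemperateGrowth := by
  refine ⟨hw.1.deriv', fun n ↦ ?_⟩
  obtain ⟨k, C, hC⟩ := hw.2 (n + 1)
  refine ⟨k, C, fun x ↦ ?_⟩
  simpa only [norm_iteratedFDeriv_eq_norm_iteratedDeriv, iteratedDeriv_succ'] using hC x

lemma integral_smul_deriv_schwartzMap {w : ℝ → ℝ} (hw : w.HasTemperateGrowth) (f : 𝓢(ℝ, E)) :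
    ∫ x, w x • deriv f x = -∫ x, deriv w x • f x :=
  integral_bilinear_hasDerivAt_right_eq_neg_left_of_integrable
    (L := ContinuousLinearMap.lsmul ℝ ℝ)
    (fun x _ ↦ (hw.1.differentiable (by simp) x).hasDerivAt) (fun x _ ↦ f.hasDerivAt x)
    (integrable_smul_schwartzMap hw (SchwartzMap.derivCLM ℝ E f))
    (integrable_smul_schwartzMap (hasTemperateGrowth_deriv hw) f) (integrable_smul_schwartzMap hw f)

lemma coe_iterate_derivCLM (n : ℕ) (f : 𝓢(ℝ, E)) :
    ⇑((SchwartzMap.derivCLM ℝ E)^[n] f) = iteratedDeriv n f := by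
  induction n with
  | zero => simp
  | succ n ih =>
    ext x
    rw [Function.iterate_succ_apply', SchwartzMap.derivCLM_apply, ih, iteratedDeriv_succ]

lemma integrable_iteratedDeriv_schwartzMap (n : ℕ) (f : 𝓢(ℝ, E)) :
    Integrable (iteratedDeriv n f) :=
  coe_iterate_derivCLM n f ▸ SchwartzMap.integrable _

lemma integral_iteratedDeriv_schwartzMap {n : ℕ} (hn : n ≠ 0) (f : 𝓢(ℝ, E)) :
    ∫ x, iteratedDeriv n f x = 0 := by
  obtain ⟨k, rfl⟩ := Nat.exists_eq_succ_of_ne_zero hn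
  have h := integral_smul_deriv_schwartzMap (.const (1 : ℝ)) ((SchwartzMap.derivCLM ℝ E)^[k] f)
  simpa [coe_iterate_derivCLM, iteratedDeriv_succ] using h

lemma integrable_id_smul_deriv_schwartzMap (f : 𝓢(ℝ, E)) :
    Integrable fun x : ℝ ↦ x • deriv f x :=
  integrable_smul_schwartzMap .id' (SchwartzMap.derivCLM ℝ E f)

lemma integral_id_smul_deriv_schwartzMap (f : 𝓢(ℝ, E)) :
    ∫ x : ℝ, x • deriv f x = -∫ x, f x := by
  simpa using integral_smul_deriv_schwartzMap .id' f

variable {n : ℕ} {c a b : ℝ} {f : 𝓢(ℝ, E)} {g : ℝ → E}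

lemma integrable_of_similarity_ode
    (hode : ∀ y, c • iteratedDeriv n f y + a • y • deriv f y + b • f y + g y = 0) :
    Integrable g := by
  have hg : g = fun y ↦ -(c • iteratedDeriv n f y + a • y • deriv f y + b • f y) :=
    funext fun y ↦ (neg_eq_of_add_eq_zero_right (hode y)).symm
  rw [hg]
  exact ((((integrable_iteratedDeriv_schwartzMap n f).smul c).add
    ((integrable_id_smul_deriv_schwartzMap f).smul a)).add (f.integrable.smul b)).neg

lemma integral_of_similarity_ode (hn : n ≠ 0)
    (hode : ∀ y, c • iteratedDeriv n f y + a • y • deriv f y + b • f y + g y = 0) :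
    ∫ y, g y = (a - b) • ∫ y, f y := by
  have hlead : Integrable fun y ↦ c • iteratedDeriv n f y :=
    (integrable_iteratedDeriv_schwartzMap n f).smul c
  have hdrift : Integrable fun y : ℝ ↦ a • y • deriv f y :=
    (integrable_id_smul_deriv_schwartzMap f).smul a
  have hlin : Integrable fun y ↦ b • f y := f.integrable.smul b
  calc ∫ y, g y
      = ∫ y, -(c • iteratedDeriv n f y + a • y • deriv f y + b • f y) :=
        integral_congr_ae (.of_forall fun y ↦ (neg_eq_of_add_eq_zero_right (hode y)).symm)
    _ = -(c • (∫ y, iteratedDeriv n f y) + a • (∫ y : ℝ, y • deriv f y) + b • ∫ y, f y) := by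
        rw [integral_neg, integral_add (hlead.fun_add hdrift) hlin,
          integral_add hlead hdrift, integral_smul, integral_smul, integral_smul]
    _ = (a - b) • ∫ y, f y := by
        rw [integral_iteratedDeriv_schwartzMap hn, integral_id_smul_deriv_schwartzMap]
        module

end Schwartz

lemma integral_norm_rpow_pos {X E : Type*} [TopologicalSpace X] [MeasurableSpace X]
    {μ : Measure X} [μ.IsOpenPosMeasure] [NormedAddCommGroup E] {f : X → E} {p : ℝ} {x : X}
    (hf : Continuous f) (hp : 0 ≤ p) (hint : Integrable (fun y ↦ ‖f y‖ ^ p) μ) (hx : f x ≠ 0) :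
    0 < ∫ y, ‖f y‖ ^ p ∂μ :=
  integral_pos_of_integrable_nonneg_nonzero (x := x)
    (hf.norm.rpow_const fun _ ↦ .inr hp) hint (fun _ ↦ by positivity)
    (Real.rpow_pos_of_pos (norm_pos_iff.2 hx) p).ne'

theorem stmt_2_general {n : ℕ} (hn : n ≠ 0) (c p : ℝ) (hp : 1 < p) (f : SchwartzMap ℝ ℝ)
    (hf0 : ∃ y : ℝ, f y ≠ 0)
    (hode : ∀ y : ℝ,
      c * iteratedDeriv n (⇑f) y + (1 / n) * y * deriv (⇑f) y
        + (1 / (p - 1)) * f y + |f y| ^ p = 0) :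
    (p < n + 1 → (∫ y : ℝ, f y) < 0) ∧ (n + 1 < p → 0 < ∫ y : ℝ, f y) := by
  obtain ⟨y₀, hy₀⟩ := hf0
  have hode' : ∀ y : ℝ, c • iteratedDeriv n f y + (1 / n : ℝ) • y • deriv f y
      + (1 / (p - 1)) • f y + ‖f y‖ ^ p = 0 := by
    simpa only [smul_eq_mul, mul_assoc, Real.norm_eq_abs] using hode
  have hmass : ∫ y, ‖f y‖ ^ p = (1 / n - 1 / (p - 1)) * ∫ y, f y :=
    integral_of_similarity_ode hn hode'
  have hpos : 0 < (1 / n - 1 / (p - 1)) * ∫ y, f y :=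
    hmass ▸ integral_norm_rpow_pos f.continuous (by positivity)
      (integrable_of_similarity_ode hode') hy₀
  have hn' : (0 : ℝ) < n := by positivity
  constructor
  · intro hlt
    have hcoef : (1 / n : ℝ) < 1 / (p - 1) :=
      one_div_lt_one_div_of_lt (by linarith) (by linarith)
    exact neg_of_mul_pos_right hpos (sub_neg.2 hcoef).le
  · intro hgt
    have hcoef : 1 / (p - 1) < (1 / n : ℝ) := one_div_lt_one_div_of_lt hn' (by linarith)
    exact pos_of_mul_pos_right hpos (sub_pos.2 hcoef).le

/-- For a nontrivial Schwartz solution of the fourth-order similarity ODE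
with `p > 1`, `p ≠ 5`, the total mass satisfies `∫ f < 0` for `1 < p < 5`
and `∫ f > 0` for `p > 5`. -/
theorem stmt_2 (p : ℝ) (hp : 1 < p) (hp5 : p ≠ 5) (f : SchwartzMap ℝ ℝ)
    (hf0 : ∃ y : ℝ, f y ≠ 0)
    (hode : ∀ y : ℝ,
      -(iteratedDeriv 4 (⇑f) y) + (1 / 4) * y * deriv (⇑f) y
        + (1 / (p - 1)) * f y + |f y| ^ p = 0) :
    (p < 5 → (∫ y : ℝ, f y) < 0) ∧ (5 < p → 0 < ∫ y : ℝ, f y) := by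
  have hfive : ((4 : ℕ) : ℝ) + 1 = 5 := by norm_num
  simpa only [hfive] using stmt_2_general four_ne_zero (-1) p hp f hf0 (by simpa using hode)
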